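/- Let f be a c-Rayleigh polynomial in n variables (not necessarily homogeneous) with nonnegative coefficients. Then the support of f is interval convex: if α, β ∈ supp(f) and α ≤ γ ≤ β componentwise, then γ ∈ supp(f). -/

import Mathlib

open MvPolynomial

/-- The iterated partial derivative `∂^α f`. -/
noncomputable def pdMulti {n : ℕ} (α : Fin n →₀ ℕ) (f : MvPolynomial (Fin n) ℝ) :
    MvPolynomial (Fin n) ℝ :=
  (List.finRange n).foldr (fun i g => (fun h => pderiv i h)^[α i] g) f

/-- `f` is `c`-Rayleigh. -/
def IsCRayleigh {n : ℕ} (c : ℝ) (f : MvPolynomial (Fin n) ℝ) : Prop :=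
  (∀ α : Fin n →₀ ℕ, 0 ≤ f.coeff α) ∧
    ∀ (i j : Fin n) (α : Fin n →₀ ℕ) (w : Fin n → ℝ), (∀ k, 0 ≤ w k) →
      eval w (pdMulti α f) *
          eval w (pdMulti (α + Finsupp.single i 1 + Finsupp.single j 1) f) ≤
        c * (eval w (pdMulti (α + Finsupp.single i 1) f) *
          eval w (pdMulti (α + Finsupp.single j 1) f))

theorem Finsupp.induction_add_single {ι : Type*} {P : (ι →₀ ℕ) → Prop} (zero : P 0)
    (add_single : ∀ δ i, P δ → P (δ + Finsupp.single i 1)) (δ : ι →₀ ℕ) : P δ := by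
  suffices h : ∀ ε, P ε → P (ε + δ) by simpa using h 0 zero
  induction δ using Finsupp.induction_linear with
  | zero => simp
  | add a b ha hb => exact fun ε hε => by simpa [add_assoc] using hb _ (ha _ hε)
  | single i k =>
    induction k with
    | zero => simp
    | succ k ih =>
      intro ε hε
      rw [Finsupp.single_add, ← add_assoc]
      exact add_single _ _ (ih ε hε)

namespace MvPolynomial

theorem pderiv_pderiv_comm {σ R : Type*} [CommSemiring R] (i j : σ) (p : MvPolynomial σ R) :
    pderiv i (pderiv j p) = pderiv j (pderiv i p) := by
  classical
  ext m
  simp only [coeff_pderiv, add_right_comm m (Finsupp.single i 1), Finsupp.add_apply]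
  by_cases h : i = j
  · rw [h]
  · rw [Finsupp.single_eq_of_ne h, Finsupp.single_eq_of_ne (Ne.symm h)]
    push_cast
    ring

theorem hasDerivAt_eval_const {σ : Type*} [Fintype σ] (p : MvPolynomial σ ℝ) (t : ℝ) :
    HasDerivAt (fun s : ℝ => eval (fun _ => s) p) (∑ j, eval (fun _ => t) (pderiv j p)) t := by
  classical
  induction p using MvPolynomial.induction_on with
  | C a => simpa using hasDerivAt_const t a
  | add p q hp hq => simpa [Finset.sum_add_distrib] using hp.fun_add hq
  | mul_X p i hp =>
    simpa [pderiv_X, Pi.single_apply, apply_ite, Finset.sum_add_distrib, Finset.sum_mul, mul_comm,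
      Finset.mul_sum, add_comm] using hp.fun_mul (hasDerivAt_id' t)

section Nonneg

variable {σ : Type*} [Fintype σ] {p : MvPolynomial σ ℝ}

theorem eval_nonneg_of_coeff_nonneg (hp : ∀ m, 0 ≤ p.coeff m) {w : σ → ℝ} (hw : ∀ k, 0 ≤ w k) :
    0 ≤ eval w p := by
  rw [eval_eq']
  exact Finset.sum_nonneg fun m _ =>
    mul_nonneg (hp m) (Finset.prod_nonneg fun k _ => pow_nonneg (hw k) _)

theorem coeff_zero_le_eval (hp : ∀ m, 0 ≤ p.coeff m) {w : σ → ℝ} (hw : ∀ k, 0 ≤ w k) :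
    p.coeff 0 ≤ eval w p := by
  by_cases h : (0 : σ →₀ ℕ) ∈ p.support
  · rw [eval_eq']
    refine le_trans ?_ (Finset.single_le_sum (fun m _ =>
      mul_nonneg (hp m) (Finset.prod_nonneg fun k _ => pow_nonneg (hw k) _)) h)
    simp
  · rw [notMem_support_iff.1 h]
    exact eval_nonneg_of_coeff_nonneg hp hw

theorem eval_le_eval_one (hp : ∀ m, 0 ≤ p.coeff m) {w : σ → ℝ} (hw : ∀ k, 0 ≤ w k)
    (hw1 : ∀ k, w k ≤ 1) : eval w p ≤ eval (fun _ => 1) p := by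
  rw [eval_eq', eval_eq']
  refine Finset.sum_le_sum fun m _ => mul_le_mul_of_nonneg_left ?_ (hp m)
  exact Finset.prod_le_prod (fun k _ => pow_nonneg (hw k) _)
    fun k _ => pow_le_pow_left₀ (hw k) (hw1 k) _

theorem eq_zero_of_eval_one_eq_zero (hp : ∀ m, 0 ≤ p.coeff m)
    (h : eval (fun _ => (1 : ℝ)) p = 0) : p = 0 := by
  simp only [eval_eq', one_pow, Finset.prod_const_one, mul_one] at h
  rw [Finset.sum_eq_zero_iff_of_nonneg fun m _ => hp m] at h
  ext m
  by_cases hm : m ∈ p.support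
  · simpa using h m hm
  · simpa using hm

/-- If `g` does not vanish at the origin and `∂ᵢ g` does, then the Rayleigh inequalities
at order zero for `i` force `∂ᵢ g = 0`. -/
theorem pderiv_eq_zero_of_rayleigh {c : ℝ} (hc : 0 < c) {g : MvPolynomial σ ℝ}
    (hg : ∀ m, 0 ≤ g.coeff m) (h0 : 0 < g.coeff 0) {i : σ} (hi : (pderiv i g).coeff 0 = 0)
    (hR : ∀ (j : σ) (w : σ → ℝ), (∀ k, 0 ≤ w k) →
      eval w g * eval w (pderiv j (pderiv i g)) ≤
        c * (eval w (pderiv i g) * eval w (pderiv j g))) :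
    pderiv i g = 0 := by
  have hd : ∀ {q : MvPolynomial σ ℝ} (j : σ), (∀ m, 0 ≤ q.coeff m) →
      ∀ m, 0 ≤ (pderiv j q).coeff m := fun j hq m => by
    rw [coeff_pderiv]
    exact mul_nonneg (hq _) (by positivity)
  have hder := hasDerivAt_eval_const (pderiv i g)
  refine eq_zero_of_eval_one_eq_zero (hd i hg) ?_
  refine eq_zero_of_abs_deriv_le_mul_abs_self_of_eq_zero_right
    (K := ∑ j, c * eval (fun _ => 1) (pderiv j g) / g.coeff 0) (a := 0) (b := 1)
    (fun t _ => (hder t).continuousAt.continuousWithinAt)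
    (fun t _ => (hder t).hasDerivWithinAt) ?_ ?_ 1 (by simp)
  · have : (fun _ : σ => (0 : ℝ)) = 0 := rfl
    rw [this, eval_zero, constantCoeff_eq, hi]
  · intro t ht
    have hw : ∀ k : σ, 0 ≤ (fun _ : σ => t) k := fun _ => ht.1
    have hH := eval_nonneg_of_coeff_nonneg (hd i hg) hw
    rw [Real.norm_of_nonneg hH, Real.norm_of_nonneg
      (Finset.sum_nonneg fun j _ => eval_nonneg_of_coeff_nonneg (hd j (hd i hg)) hw),
      Finset.sum_mul]
    refine Finset.sum_le_sum fun j _ => ?_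
    rw [div_mul_eq_mul_div, le_div_iff₀ h0]
    calc eval (fun _ => t) (pderiv j (pderiv i g)) * g.coeff 0
        ≤ eval (fun _ => t) (pderiv j (pderiv i g)) * eval (fun _ => t) g :=
          mul_le_mul_of_nonneg_left (coeff_zero_le_eval hg hw)
            (eval_nonneg_of_coeff_nonneg (hd j (hd i hg)) hw)
      _ ≤ c * (eval (fun _ => t) (pderiv i g) * eval (fun _ => t) (pderiv j g)) := by
          rw [mul_comm]
          exact hR j _ hw
      _ ≤ c * (eval (fun _ => t) (pderiv i g) * eval (fun _ => 1) (pderiv j g)) := by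
          gcongr
          exact eval_le_eval_one (hd j hg) hw fun _ => ht.2.le
      _ = c * eval (fun _ => 1) (pderiv j g) * eval (fun _ => t) (pderiv i g) := by ring

end Nonneg

end MvPolynomial

theorem pdMulti_zero {n : ℕ} (f : MvPolynomial (Fin n) ℝ) : pdMulti 0 f = f := by
  simp [pdMulti]

theorem pdMulti_add_single {n : ℕ} (α : Fin n →₀ ℕ) (i : Fin n) (f : MvPolynomial (Fin n) ℝ) :
    pdMulti (α + Finsupp.single i 1) f = pderiv i (pdMulti α f) := by
  have hcomm (a : Fin n) (k : ℕ) (g : MvPolynomial (Fin n) ℝ) :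
      (fun h => pderiv a h)^[k] (pderiv i g) = pderiv i ((fun h => pderiv a h)^[k] g) :=
    ((show Function.Commute (fun h => pderiv a h) (fun h => pderiv i h) from
      fun g => pderiv_pderiv_comm a i g).iterate_left k) g
  have key (l : List (Fin n)) (hl : l.Nodup) :
      l.foldr (fun a g => (fun h => pderiv a h)^[(α + Finsupp.single i 1 : Fin n →₀ ℕ) a] g) f =
        if i ∈ l then pderiv i (l.foldr (fun a g => (fun h => pderiv a h)^[α a] g) f)
        else l.foldr (fun a g => (fun h => pderiv a h)^[α a] g) f := by
    induction l with
    | nil => simp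
    | cons a l ih =>
      rw [List.nodup_cons] at hl
      rw [List.foldr_cons, List.foldr_cons, ih hl.2]
      by_cases hai : i = a
      · subst hai
        simp [hl.1, Function.iterate_succ_apply']
      · by_cases hil : i ∈ l
        · simp [hil, hai, Finsupp.single_eq_of_ne (Ne.symm hai), hcomm]
        · simp [hil, hai, Finsupp.single_eq_of_ne (Ne.symm hai)]
  exact (key _ (List.nodup_finRange n)).trans (if_pos (List.mem_finRange i))

theorem exists_coeff_pdMulti {n : ℕ} (f : MvPolynomial (Fin n) ℝ) (α m : Fin n →₀ ℕ) :
    ∃ K : ℝ, 0 < K ∧ (pdMulti α f).coeff m = K * f.coeff (m + α) := by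
  induction α using Finsupp.induction_add_single generalizing m with
  | zero => exact ⟨1, one_pos, by simp [pdMulti_zero]⟩
  | add_single α i ih =>
    obtain ⟨K, hK, h⟩ := ih (m + Finsupp.single i 1)
    refine ⟨K * (m i + 1), by positivity, ?_⟩
    rw [pdMulti_add_single, coeff_pderiv, h, add_assoc, add_comm (Finsupp.single i 1)]
    ring

theorem IsCRayleigh.add_single_mem_support {n : ℕ} {c : ℝ} (hc : 0 < c)
    {f : MvPolynomial (Fin n) ℝ} (hf : IsCRayleigh c f) {α β : Fin n →₀ ℕ} {i : Fin n}
    (hα : α ∈ f.support) (hβ : β ∈ f.support) (h : α + Finsupp.single i 1 ≤ β) :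
    α + Finsupp.single i 1 ∈ f.support := by
  by_contra hi
  have hg : ∀ m, 0 ≤ (pdMulti α f).coeff m := fun m => by
    obtain ⟨K, hK, hm⟩ := exists_coeff_pdMulti f α m
    rw [hm]
    exact mul_nonneg hK.le (hf.1 _)
  have h0 : 0 < (pdMulti α f).coeff 0 := by
    obtain ⟨K, hK, hm⟩ := exists_coeff_pdMulti f α 0
    rw [hm, zero_add]
    exact mul_pos hK (lt_of_le_of_ne (hf.1 _) (mem_support_iff.1 hα).symm)
  have hi0 : (pderiv i (pdMulti α f)).coeff 0 = 0 := by
    obtain ⟨K, -, hm⟩ := exists_coeff_pdMulti f (α + Finsupp.single i 1) 0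
    rw [← pdMulti_add_single, hm, zero_add, notMem_support_iff.1 hi, mul_zero]
  have hz := pderiv_eq_zero_of_rayleigh hc hg h0 hi0 fun j w hw => by
    simpa only [pdMulti_add_single] using hf.2 i j α w hw
  obtain ⟨K, hK, hm⟩ :=
    exists_coeff_pdMulti f (α + Finsupp.single i 1) (β - (α + Finsupp.single i 1))
  rw [pdMulti_add_single, hz, coeff_zero, tsub_add_cancel_of_le h] at hm
  exact mul_ne_zero hK.ne' (mem_support_iff.1 hβ) hm.symm

theorem stmt18 {n : ℕ} (c : ℝ) (hc : 0 < c) (f : MvPolynomial (Fin n) ℝ)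
    (hf : IsCRayleigh c f) :
    ∀ α ∈ f.support, ∀ β ∈ f.support, ∀ γ : Fin n →₀ ℕ,
      α ≤ γ → γ ≤ β → γ ∈ f.support := by
  intro α hα β hβ γ hαγ hγβ
  obtain ⟨δ, rfl⟩ := exists_add_of_le hαγ
  clear hαγ
  induction δ using Finsupp.induction_add_single with
  | zero => simpa using hα
  | add_single δ i ih =>
    rw [← add_assoc] at hγβ ⊢
    exact hf.add_single_mem_support hc (ih (le_self_add.trans hγβ)) hβ hγβ
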